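/- arXiv:math/0701617 — 6 statements merged into one kernel-verified Lean document; each statement's English description precedes it below -/
import Mathlib

section
/- Let C > 0, R > 0 and 0 < δ ≤ R. Let φ : ℂ² → ℂ² be smooth on the open ball of radius R around the origin (with respect to the Euclidean norm), and suppose that for every v with ‖v‖ ≤ R one has ‖φ(v) − v‖ ≤ C‖v‖² and ‖Dφ(v) − id‖ ≤ C‖v‖, where Dφ(v) is the real Fréchet derivative of φ at v. Let β : ℝ → ℝ be a smooth function with 0 ≤ β ≤ 1, β(r) = 0 for r ≤ 1/3, β(r) = 1 for r ≥ 1, and |β′(r)| ≤ 2 for all r. Define φ′(v) = v + β(‖v‖/δ)·(φ(v) − v). Then: (i) φ′ is smooth on the ball of radius R; (ii) φ′(v) = φ(v) whenever δ ≤ ‖v‖ ≤ R; (iii) φ′(v) = v whenever ‖v‖ ≤ δ/3 (in particular φ′ is holomorphic on the ball of radius δ/3); (iv) for every v with ‖v‖ ≤ R one has ‖φ′(v) − φ(v)‖ + ‖Dφ′(v) − Dφ(v)‖ ≤ (3 + δ)·C·δ; and (v) if φ maps points of the form (w,0) in the ball to points of ℂ × {0}, then so does φ′. -/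
noncomputable section

/-- `ℂ²` with the Euclidean norm `‖(w,z)‖ = (|w|² + |z|²)^{1/2}`. -/
abbrev Csq : Type := EuclideanSpace ℂ (Fin 2)

section Cutoff

variable {E : Type*} [NormedAddCommGroup E] [InnerProductSpace ℝ E]

/-- A radial cutoff whose smooth profile vanishes on `r ≤ a` is smooth, even at the origin. -/
lemma contDiff_radial_cutoff {β : ℝ → ℝ} {δ a : ℝ} {n : ℕ∞} (hβ : ContDiff ℝ n β) (hδ : 0 < δ)
    (ha : 0 < a) (hβ0 : ∀ r ≤ a, β r = 0) : ContDiff ℝ n fun v : E => β (‖v‖ / δ) := by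
  rw [contDiff_iff_contDiffAt]
  intro v
  rcases eq_or_ne v 0 with rfl | hv
  · refine (contDiffAt_const (c := (0 : ℝ))).congr_of_eventuallyEq ?_
    filter_upwards [Metric.ball_mem_nhds (0 : E) (mul_pos ha hδ)] with w hw
    rw [mem_ball_zero_iff] at hw
    exact hβ0 _ ((div_le_iff₀ hδ).2 hw.le)
  · exact hβ.contDiffAt.comp v ((contDiffAt_norm ℝ hv).div_const δ)

/-- The derivative of a radial cutoff at scale `δ` is bounded by that of its profile over `δ`. -/
lemma norm_fderiv_radial_cutoff_le {β : ℝ → ℝ} {δ K : ℝ} (hβ : Differentiable ℝ β) (hδ : 0 < δ)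
    (hK : ∀ r, |deriv β r| ≤ K) (v : E) : ‖fderiv ℝ (fun v : E => β (‖v‖ / δ)) v‖ ≤ K / δ := by
  have hK0 : 0 ≤ K := (abs_nonneg _).trans (hK 0)
  have hlip : LipschitzWith K.toNNReal β := lipschitzWith_of_nnnorm_deriv_le hβ fun r => by
    rw [← NNReal.coe_le_coe, Real.coe_toNNReal K hK0]
    exact hK r
  have hcut : LipschitzWith (K / δ).toNNReal fun v : E => β (‖v‖ / δ) := by
    refine LipschitzWith.of_dist_le_mul fun x y => ?_
    rw [Real.coe_toNNReal _ (by positivity)]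
    have h := hlip.dist_le_mul (‖x‖ / δ) (‖y‖ / δ)
    rw [Real.coe_toNNReal K hK0, Real.dist_eq (‖x‖ / δ), ← sub_div, abs_div,
      abs_of_pos hδ] at h
    calc dist (β (‖x‖ / δ)) (β (‖y‖ / δ)) ≤ K * (|‖x‖ - ‖y‖| / δ) := h
      _ ≤ K * (dist x y / δ) := by
        gcongr
        rw [dist_eq_norm]
        exact abs_norm_sub_norm_le x y
      _ = K / δ * dist x y := by ring
  simpa [Real.coe_toNNReal _ (div_nonneg hK0 hδ.le)] using
    norm_fderiv_le_of_lipschitz ℝ hcut (x₀ := v)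

/-- Multiplying by a nonvanishing differentiable scalar function does not affect
differentiability of the displacement of a map from the identity. -/
lemma differentiableAt_of_add_smul_sub {f : E → E} {g : E → ℝ} {v : E}
    (hg : DifferentiableAt ℝ g v) (hgv : g v ≠ 0)
    (h : DifferentiableAt ℝ (fun w => w + g w • (f w - w)) v) : DifferentiableAt ℝ f v := by
  have hk : DifferentiableAt ℝ (fun w => w + (g w)⁻¹ • (w + g w • (f w - w) - w)) v :=
    differentiableAt_fun_id.add ((hg.inv hgv).smul (h.sub differentiableAt_fun_id))
  refine hk.congr_of_eventuallyEq ?_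
  filter_upwards [hg.continuousAt.eventually_ne hgv] with w hw
  rw [add_sub_cancel_left, inv_smul_smul₀ hw, add_sub_cancel]

/-- A bound for the derivative of the difference between `f` and its interpolation with the identity. -/
lemma norm_fderiv_add_smul_sub_sub_le {f : E → E} {g : E → ℝ} {v : E}
    (hg : DifferentiableAt ℝ g v) (hf : DifferentiableAt ℝ f v) (h0 : 0 ≤ g v) (h1 : g v ≤ 1) :
    ‖fderiv ℝ (fun w => w + g w • (f w - w)) v - fderiv ℝ f v‖ ≤
      ‖fderiv ℝ f v - ContinuousLinearMap.id ℝ E‖ + ‖fderiv ℝ g v‖ * ‖f v - v‖ := by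
  have h := (hasFDerivAt_id v).add
    (hg.hasFDerivAt.smul (hf.hasFDerivAt.sub (hasFDerivAt_id v)))
  have h' : HasFDerivAt (fun w => w + g w • (f w - w)) _ v := h
  have heq : fderiv ℝ (fun w => w + g w • (f w - w)) v - fderiv ℝ f v =
      (g v - 1) • (fderiv ℝ f v - ContinuousLinearMap.id ℝ E) +
        (fderiv ℝ g v).smulRight (f v - v) := by
    rw [h'.fderiv]
    ext w
    simp [sub_smul, smul_sub]
    abel
  rw [heq]
  refine (norm_add_le _ _).trans (add_le_add ?_ ?_)
  · rw [norm_smul]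
    refine mul_le_of_le_one_left (norm_nonneg _) ?_
    rw [Real.norm_eq_abs, abs_le]
    constructor <;> linarith
  · rw [ContinuousLinearMap.norm_smulRight_apply]

end Cutoff

/-- Quantitative cutoff-interpolation estimate from the proof of Lemma 3.2
("makehol") of the paper. -/
theorem cutoff_interpolation
    (C R δ : ℝ) (hC : 0 < C) (hR : 0 < R) (hδ : 0 < δ) (hδR : δ ≤ R)
    (φ : Csq → Csq)
    (hφsmooth : ContDiffOn ℝ (⊤ : ℕ∞) φ (Metric.ball 0 R))
    (hφ0 : ∀ v : Csq, ‖v‖ ≤ R → ‖φ v - v‖ ≤ C * ‖v‖ ^ 2)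
    (hφ1 : ∀ v : Csq, ‖v‖ ≤ R →
      ‖fderiv ℝ φ v - ContinuousLinearMap.id ℝ Csq‖ ≤ C * ‖v‖)
    (β : ℝ → ℝ) (hβsmooth : ContDiff ℝ (⊤ : ℕ∞) β)
    (hβ01 : ∀ r : ℝ, 0 ≤ β r ∧ β r ≤ 1)
    (hβ0 : ∀ r : ℝ, r ≤ 1/3 → β r = 0)
    (hβ1 : ∀ r : ℝ, 1 ≤ r → β r = 1)
    (hβ' : ∀ r : ℝ, |deriv β r| ≤ 2)
    (φ' : Csq → Csq)
    (hφ' : ∀ v : Csq, φ' v = v + β (‖v‖ / δ) • (φ v - v)) :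
    -- (i) φ' is smooth on the ball of radius R
    ContDiffOn ℝ (⊤ : ℕ∞) φ' (Metric.ball 0 R) ∧
    -- (ii) φ' = φ on the region δ ≤ ‖v‖ ≤ R
    (∀ v : Csq, δ ≤ ‖v‖ → ‖v‖ ≤ R → φ' v = φ v) ∧
    -- (iii) φ' = id on the ball of radius δ/3, in particular holomorphic there
    (∀ v : Csq, ‖v‖ ≤ δ/3 → φ' v = v) ∧
    DifferentiableOn ℂ φ' (Metric.ball 0 (δ/3)) ∧
    -- (iv) the C¹-distance between φ' and φ is at most (3 + δ)·C·δ
    (∀ v : Csq, ‖v‖ ≤ R →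
      ‖φ' v - φ v‖ + ‖fderiv ℝ φ' v - fderiv ℝ φ v‖ ≤ (3 + δ) * C * δ) ∧
    -- (v) if φ preserves the slice ℂ × {0}, then so does φ'
    ((∀ v : Csq, v ∈ Metric.ball (0 : Csq) R → v 1 = 0 → φ v 1 = 0) →
      (∀ v : Csq, v ∈ Metric.ball (0 : Csq) R → v 1 = 0 → φ' v 1 = 0)) := by
  let : InnerProductSpace ℝ Csq := InnerProductSpace.rclikeToReal ℂ Csq
  obtain rfl : φ' = fun v => v + β (‖v‖ / δ) • (φ v - v) := funext hφ'
  have hg : ContDiff ℝ (⊤ : ℕ∞) fun v : Csq => β (‖v‖ / δ) :=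
    contDiff_radial_cutoff hβsmooth hδ (by norm_num) hβ0
  have hgd : Differentiable ℝ fun v : Csq => β (‖v‖ / δ) := hg.differentiable (by simp)
  have outer : ∀ v : Csq, δ ≤ ‖v‖ → v + β (‖v‖ / δ) • (φ v - v) = φ v := fun v hv => by
    rw [hβ1 _ ((one_le_div hδ).2 hv), one_smul, add_sub_cancel]
  have inner : ∀ v : Csq, ‖v‖ ≤ δ / 3 → v + β (‖v‖ / δ) • (φ v - v) = v := fun v hv => by
    rw [hβ0 _ ((div_le_iff₀ hδ).2 (by linarith)), zero_smul, add_zero]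
  refine ⟨contDiffOn_id.add (hg.contDiffOn.smul (hφsmooth.sub contDiffOn_id)),
    fun v hv _ => outer v hv, inner, ?_, fun v hv => ?_, fun h v hv hv1 => ?_⟩
  · exact differentiableOn_id.congr fun v hv => inner v (mem_ball_zero_iff.1 hv).le
  · beta_reduce
    rcases lt_or_ge δ ‖v‖ with hlt | hle
    · have hev : (fun w => w + β (‖w‖ / δ) • (φ w - w)) =ᶠ[nhds v] φ := by
        filter_upwards [continuous_norm.continuousAt.eventually (lt_mem_nhds hlt)] with w hw
        exact outer w hw.le
      rw [hev.fderiv_eq, outer v hlt.le, sub_self, sub_self, norm_zero, norm_zero, add_zero]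
      positivity
    by_cases hd : DifferentiableAt ℝ φ v
    · obtain ⟨h0, h1⟩ := hβ01 (‖v‖ / δ)
      have hsq : C * ‖v‖ ^ 2 ≤ C * δ ^ 2 := by gcongr
      have hval : ‖v + β (‖v‖ / δ) • (φ v - v) - φ v‖ ≤ C * δ ^ 2 := by
        have : v + β (‖v‖ / δ) • (φ v - v) - φ v = (β (‖v‖ / δ) - 1) • (φ v - v) := by
          rw [sub_smul, one_smul]
          abel
        rw [this, norm_smul]
        refine (mul_le_of_le_one_left (norm_nonneg _) ?_).trans ((hφ0 v hv).trans hsq)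
        rw [Real.norm_eq_abs, abs_le]
        constructor <;> linarith
      have hder := norm_fderiv_add_smul_sub_sub_le (hgd v) hd h0 h1
      have hlin : C * ‖v‖ ≤ C * δ := by gcongr
      have hprod : ‖fderiv ℝ (fun v : Csq => β (‖v‖ / δ)) v‖ * ‖φ v - v‖ ≤
          2 / δ * (C * δ ^ 2) :=
        mul_le_mul (norm_fderiv_radial_cutoff_le (hβsmooth.differentiable (by simp)) hδ hβ' v)
          ((hφ0 v hv).trans hsq) (norm_nonneg _) (by positivity)
      have hcancel : 2 / δ * (C * δ ^ 2) = 2 * C * δ := by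
        field_simp
      linarith [hφ1 v hv]
    · -- On the boundary of the ball `φ` may fail to be differentiable; then so does the interpolation.
      have hδv : ‖v‖ = δ := by
        refine le_antisymm hle (hδR.trans (not_lt.1 fun hlt => hd ?_))
        exact (hφsmooth.contDiffAt (Metric.isOpen_ball.mem_nhds
          (mem_ball_zero_iff.2 hlt))).differentiableAt (by simp)
      have hgv : β (‖v‖ / δ) ≠ 0 := by
        rw [hβ1 _ ((one_le_div hδ).2 hδv.ge)]
        exact one_ne_zero
      have hd' := mt (differentiableAt_of_add_smul_sub (hgd v) hgv) hd
      rw [fderiv_zero_of_not_differentiableAt hd, fderiv_zero_of_not_differentiableAt hd',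
        outer v hδv.ge, sub_self, sub_self, norm_zero, norm_zero, add_zero]
      positivity
  · simp [h v hv hv1, hv1]
end
end

section
/- Let T² = (ℝ × ℝ)/(ℤ × ℤ) be the quotient additive group, with quotient map π : ℝ × ℝ → T², and let τ₁ : T² → T² be the translation p ↦ p + π(1/2, 0). Let a, b, c, d be integers with a·d − b·c = 1, let A be the matrix !![a, b; c, d] ∈ SL(2,ℤ), and let Ā : T² → T² be the map induced on the quotient by the linear action of A on ℝ² (which preserves ℤ × ℤ). Then: (i) for every p ∈ T², Ā⁻¹(τ₁(Ā(τ₁(p)))) = p + π((d+1)/2, −c/2); (ii) the map Ā⁻¹ ∘ τ₁ ∘ Ā ∘ τ₁ is the identity map of T² if and only if c is even; and (iii) if c is odd, then Ā⁻¹ ∘ τ₁ ∘ Ā ∘ τ₁ is an involution of T² with no fixed points. -/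
/-- The lattice `ℤ × ℤ` inside `ℝ × ℝ`. -/
noncomputable def latticeZ2 : AddSubgroup (ℝ × ℝ) :=
  (AddSubgroup.zmultiples (1 : ℝ)).prod (AddSubgroup.zmultiples (1 : ℝ))

/-- The 2-torus `T² = (ℝ × ℝ)/(ℤ × ℤ)`. -/
abbrev Torus2 : Type := (ℝ × ℝ) ⧸ latticeZ2

/-- The quotient map `π : ℝ × ℝ → T²`. -/
noncomputable def torusPi : ℝ × ℝ →+ Torus2 := QuotientAddGroup.mk' latticeZ2

/-- The translation `τ₁ : p ↦ p + π(1/2, 0)` of the torus. -/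
noncomputable def tau1 (p : Torus2) : Torus2 := p + torusPi (1/2, 0)

theorem torusPi_eq_zero_iff {x y : ℝ} :
    torusPi (x, y) = 0 ↔ (∃ m : ℤ, (m : ℝ) = x) ∧ ∃ n : ℤ, (n : ℝ) = y := by
  change ((x, y) : Torus2) = 0 ↔ _
  rw [QuotientAddGroup.eq_zero_iff]
  simp [latticeZ2, AddSubgroup.mem_prod, AddSubgroup.mem_zmultiples_iff]

theorem torusPi_surjective : Function.Surjective torusPi :=
  QuotientAddGroup.mk'_surjective latticeZ2

theorem exists_intCast_eq_div_two_iff {k : ℤ} : (∃ m : ℤ, (m : ℝ) = (k : ℝ) / 2) ↔ Even k := by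
  rw [even_iff_exists_two_mul]
  refine exists_congr fun m => ?_
  rw [eq_div_iff two_ne_zero, ← @Int.cast_inj ℝ]
  push_cast
  constructor <;> intro h <;> linarith

/-- The half-lattice point attached to the second row of a unimodular matrix vanishes in the torus
exactly when the lower left entry is even. -/
theorem torusPi_half_eq_zero_iff {a b c d : ℤ} (hdet : a * d - b * c = 1) :
    torusPi (((d : ℝ) + 1) / 2, -(c : ℝ) / 2) = 0 ↔ Even c := by
  have h₁ := exists_intCast_eq_div_two_iff (k := d + 1)
  have h₂ := exists_intCast_eq_div_two_iff (k := -c)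
  push_cast at h₁ h₂
  rw [torusPi_eq_zero_iff, h₁, h₂, even_neg, and_iff_right_iff_imp]
  intro hc
  have had : Odd (a * d) := by
    rw [show a * d = b * c + 1 by linarith]
    exact (hc.mul_left b).add_one
  exact (Int.odd_mul.mp had).2.add_one

theorem torusPi_half_add_self (c d : ℤ) :
    torusPi (((d : ℝ) + 1) / 2, -(c : ℝ) / 2) + torusPi (((d : ℝ) + 1) / 2, -(c : ℝ) / 2) = 0 := by
  rw [← map_add, Prod.mk_add_mk, torusPi_eq_zero_iff]
  exact ⟨⟨d + 1, by push_cast; ring⟩, ⟨-c, by push_cast; ring⟩⟩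

/-- The core computation in the proof of Lemma 3.7 ("isotinv") of the paper: for
`A = !![a, b; c, d] ∈ SL(2,ℤ)` inducing `Ā` on `T² = (ℝ × ℝ)/(ℤ × ℤ)` and
`τ₁ : p ↦ p + π(1/2, 0)`, the composite `Ā⁻¹ ∘ τ₁ ∘ Ā ∘ τ₁` is translation by
`π((d+1)/2, −c/2)`; it is the identity iff `c` is even, and a free involution if
`c` is odd. -/
theorem isotinv_computation
    (a b c d : ℤ) (hdet : a * d - b * c = 1)
    (Abar : Torus2 ≃ Torus2)
    (hAbar : ∀ x y : ℝ,
      Abar (torusPi (x, y)) = torusPi ((a : ℝ) * x + (b : ℝ) * y, (c : ℝ) * x + (d : ℝ) * y)) :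
    -- (i) the composite is translation by π((d+1)/2, −c/2)
    (∀ p : Torus2,
      Abar.symm (tau1 (Abar (tau1 p))) = p + torusPi (((d : ℝ) + 1) / 2, -(c : ℝ) / 2)) ∧
    -- (ii) the composite is the identity iff c is even
    ((∀ p : Torus2, Abar.symm (tau1 (Abar (tau1 p))) = p) ↔ Even c) ∧
    -- (iii) if c is odd the composite is a fixed-point-free involution
    (Odd c →
      Function.Involutive (fun p : Torus2 => Abar.symm (tau1 (Abar (tau1 p)))) ∧
      ∀ p : Torus2, Abar.symm (tau1 (Abar (tau1 p))) ≠ p) := by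
  have hdet' : (a : ℝ) * d - b * c = 1 := by exact_mod_cast hdet
  have translation : ∀ p : Torus2,
      Abar.symm (tau1 (Abar (tau1 p))) = p + torusPi (((d : ℝ) + 1) / 2, -(c : ℝ) / 2) := by
    intro p
    obtain ⟨⟨x, y⟩, rfl⟩ := torusPi_surjective p
    rw [Equiv.symm_apply_eq, tau1, tau1, ← map_add, ← map_add, Prod.mk_add_mk, Prod.mk_add_mk,
      hAbar, hAbar, ← map_add, Prod.mk_add_mk]
    congr 2
    · linear_combination -hdet' / 2
    · ring
  refine ⟨translation, ?_, fun hc => ⟨fun p => ?_, fun p => ?_⟩⟩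
  · simp only [translation, add_eq_left, forall_const, torusPi_half_eq_zero_iff hdet]
  · simp only [translation, add_assoc, torusPi_half_add_self, add_zero]
  · rw [translation, Ne, add_eq_left, torusPi_half_eq_zero_iff hdet]
    exact Int.not_even_iff_odd.mpr hc
end

section
/- For any integer j, let P_j be the group with presentation ⟨α, β, m ∣ α⁻¹mα = m⁻¹, βm = mβ, αβα⁻¹β⁻¹ = m^j⟩. Then there exists a group automorphism φ of P_j with φ(α) = α, φ(β) = β·m^j, and φ(m) = m⁻¹; that is, the elements α, β·m^j, m⁻¹ generate P_j and satisfy the same defining relations. -/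
/-- Generators `α`, `β`, `m` of the group `P_j`. -/
inductive AnnGen : Type
  | a : AnnGen  -- α
  | b : AnnGen  -- β
  | m : AnnGen  -- m

open FreeGroup in
/-- The relators of the presentation
`P_j = ⟨α, β, m ∣ α⁻¹mα = m⁻¹, βm = mβ, αβα⁻¹β⁻¹ = m^j⟩`. -/
def annulusRels (j : ℤ) : Set (FreeGroup AnnGen) :=
  { (of AnnGen.a)⁻¹ * of AnnGen.m * of AnnGen.a * of AnnGen.m,
    of AnnGen.b * of AnnGen.m * (of AnnGen.b)⁻¹ * (of AnnGen.m)⁻¹,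
    of AnnGen.a * of AnnGen.b * (of AnnGen.a)⁻¹ * (of AnnGen.b)⁻¹ * (of AnnGen.m) ^ (-j) }

/-- The group `P_j`, the fundamental group of the orientable annulus bundle `Y_j` over
the torus with a single boundary component (equation (annpi1) of the paper). -/
abbrev AnnGroup (j : ℤ) : Type := PresentedGroup (annulusRels j)

namespace AnnGroup

variable (j : ℤ)

/-- Conjugation by `α` inverts `m`. -/
theorem conj_a_m :
    (PresentedGroup.of AnnGen.a * PresentedGroup.of AnnGen.m * (PresentedGroup.of AnnGen.a)⁻¹ :
      AnnGroup j) = (PresentedGroup.of AnnGen.m)⁻¹ := by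
  have h : ((PresentedGroup.of AnnGen.a)⁻¹ * PresentedGroup.of AnnGen.m *
      PresentedGroup.of AnnGen.a * PresentedGroup.of AnnGen.m : AnnGroup j) = 1 :=
    PresentedGroup.one_of_mem (rels := annulusRels j) (Or.inl rfl)
  rw [mul_eq_one_iff_eq_inv] at h
  rw [← inv_inj, inv_inv, mul_inv_rev, mul_inv_rev, inv_inv, ← h]
  group

/-- The generators `β` and `m` commute. -/
theorem commute_b_m :
    Commute (PresentedGroup.of AnnGen.b : AnnGroup j) (PresentedGroup.of AnnGen.m) := by
  have h : (PresentedGroup.of AnnGen.b * PresentedGroup.of AnnGen.m *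
      (PresentedGroup.of AnnGen.b)⁻¹ * (PresentedGroup.of AnnGen.m)⁻¹ : AnnGroup j) = 1 :=
    PresentedGroup.one_of_mem (rels := annulusRels j) (Or.inr (Or.inl rfl))
  rwa [mul_inv_eq_one, mul_inv_eq_iff_eq_mul] at h

/-- Conjugation by `α` sends `β` to `β * m ^ j`. -/
theorem conj_a_b :
    (PresentedGroup.of AnnGen.a * PresentedGroup.of AnnGen.b * (PresentedGroup.of AnnGen.a)⁻¹ :
      AnnGroup j) = PresentedGroup.of AnnGen.b * PresentedGroup.of AnnGen.m ^ j := by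
  have h : (PresentedGroup.of AnnGen.a * PresentedGroup.of AnnGen.b *
      (PresentedGroup.of AnnGen.a)⁻¹ * (PresentedGroup.of AnnGen.b)⁻¹ *
      PresentedGroup.of AnnGen.m ^ (-j) : AnnGroup j) = 1 :=
    PresentedGroup.one_of_mem (rels := annulusRels j) (Or.inr (Or.inr rfl))
  rwa [zpow_neg, mul_inv_eq_one, mul_inv_eq_iff_eq_mul,
    ← ((commute_b_m j).zpow_right j).eq] at h

end AnnGroup

/-- There is an automorphism of `P_j` sending `α ↦ α`, `β ↦ β·m^j`, `m ↦ m⁻¹`. -/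
theorem annulus_group_automorphism_flip (j : ℤ) :
    ∃ φ : AnnGroup j ≃* AnnGroup j,
      φ (PresentedGroup.of AnnGen.a) = PresentedGroup.of AnnGen.a ∧
      φ (PresentedGroup.of AnnGen.b)
        = PresentedGroup.of AnnGen.b * (PresentedGroup.of AnnGen.m : AnnGroup j) ^ j ∧
      φ (PresentedGroup.of AnnGen.m) = (PresentedGroup.of AnnGen.m : AnnGroup j)⁻¹ := by
  refine ⟨MulAut.conj (PresentedGroup.of AnnGen.a), ?_, ?_, ?_⟩
  · rw [MulAut.conj_apply, mul_inv_cancel_right]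
  · exact AnnGroup.conj_a_b j
  · exact AnnGroup.conj_a_m j
end

section
/- For any integer j, let P_j be the group with presentation ⟨α, β, m ∣ α⁻¹mα = m⁻¹, βm = mβ, αβα⁻¹β⁻¹ = m^j⟩. Let p, q, r, s, t be integers with p·s − q·r = 1, q even, and s = 2t + 1. Then there exists a group automorphism φ of P_j with φ(α) = α^p·β^r, φ(β) = α^q·β^s·m^{j·t}, and φ(m) = m. -/
/-- The defining relations of `P_j`, for elements `a`, `b`, `m` of an arbitrary group. -/
structure AnnRelations {G : Type*} [Group G] (j : ℤ) (a b m : G) : Prop where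
  a_mul_m : a * m = m⁻¹ * a
  b_mul_m : b * m = m * b
  a_mul_b : a * b = m ^ j * b * a

/-- The element `a ^ (2 * x) * b ^ y * m ^ z`. -/
def annWord {G : Type*} [Group G] (a b m : G) (x y z : ℤ) : G :=
  (a ^ 2) ^ x * b ^ y * m ^ z

namespace AnnRelations

variable {G : Type*} [Group G] {j : ℤ} {a b m : G}

theorem a_mul_m_zpow (h : AnnRelations j a b m) (z : ℤ) : a * m ^ z = m ^ (-z) * a := by
  have h₁ : SemiconjBy a m m⁻¹ := h.a_mul_m
  simpa using (h₁.zpow_right z).eq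

theorem commute_b_m (h : AnnRelations j a b m) : Commute b m := h.b_mul_m

theorem a_mul_b_zpow (h : AnnRelations j a b m) (y : ℤ) :
    a * b ^ y = b ^ y * m ^ (j * y) * a := by
  have h₁ : SemiconjBy a b (m ^ j * b) := h.a_mul_b
  have h₂ := (h₁.zpow_right y).eq
  rw [(h.commute_b_m.symm.zpow_left j).mul_zpow, ← zpow_mul] at h₂
  rw [h₂, (h.commute_b_m.symm.zpow_zpow (j * y) y).eq]

theorem commute_sq_m (h : AnnRelations j a b m) : Commute (a ^ 2) m := by
  have h₁ : SemiconjBy a m m⁻¹ := h.a_mul_m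
  have h₂ := h₁.inv_right.mul_left h₁
  rwa [inv_inv, ← sq] at h₂

theorem commute_sq_b (h : AnnRelations j a b m) : Commute (a ^ 2) b := by
  have h₁ := h.a_mul_b
  have h₂ := h.a_mul_m_zpow j
  change a ^ 2 * b = b * a ^ 2
  calc a ^ 2 * b = a * (a * b) := by rw [sq, mul_assoc]
    _ = (a * m ^ j) * b * a := by rw [h₁]; group
    _ = m ^ (-j) * (a * b) * a := by rw [h₂]; group
    _ = b * a ^ 2 := by rw [h₁, sq]; group

theorem annWord_mul (h : AnnRelations j a b m) (x y z x' y' z' : ℤ) :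
    annWord a b m x y z * annWord a b m x' y' z' =
      annWord a b m (x + x') (y + y') (z + z') := by
  have h₁ := (h.commute_b_m.zpow_zpow y' z).eq
  have h₂ := (h.commute_sq_m.zpow_zpow x' z).eq
  have h₃ := (h.commute_sq_b.zpow_zpow x' y).eq
  simp only [annWord, zpow_add]
  calc _ = (a ^ 2) ^ x * b ^ y * (m ^ z * (a ^ 2) ^ x') * b ^ y' * m ^ z' := by
        simp only [mul_assoc]
    _ = (a ^ 2) ^ x * (b ^ y * (a ^ 2) ^ x') * (m ^ z * b ^ y') * m ^ z' := by
        rw [← h₂]; simp only [mul_assoc]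
    _ = _ := by rw [← h₃, ← h₁]; simp only [mul_assoc]

theorem annWord_zpow (h : AnnRelations j a b m) (x y z n : ℤ) :
    annWord a b m x y z ^ n = annWord a b m (x * n) (y * n) (z * n) := by
  have h₁ : Commute ((a ^ 2) ^ x * b ^ y) (m ^ z) :=
    (h.commute_sq_m.zpow_zpow x z).mul_left (h.commute_b_m.zpow_zpow y z)
  simp only [annWord]
  rw [h₁.mul_zpow, (h.commute_sq_b.zpow_zpow x y).mul_zpow]
  simp only [zpow_mul]

theorem a_mul_annWord (h : AnnRelations j a b m) (x y z : ℤ) :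
    a * annWord a b m x y z = annWord a b m x y (j * y - z) * a := by
  have h₁ : a * (a ^ 2) ^ x = (a ^ 2) ^ x * a :=
    (((Commute.refl a).pow_right 2).zpow_right x).eq
  simp only [annWord, sub_eq_add_neg, zpow_add]
  calc _ = a * (a ^ 2) ^ x * b ^ y * m ^ z := by simp only [mul_assoc]
    _ = (a ^ 2) ^ x * (a * b ^ y) * m ^ z := by rw [h₁]; simp only [mul_assoc]
    _ = (a ^ 2) ^ x * b ^ y * m ^ (j * y) * (a * m ^ z) := by
        rw [h.a_mul_b_zpow]; simp only [mul_assoc]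
    _ = _ := by rw [h.a_mul_m_zpow]; simp only [mul_assoc]

theorem annWord_mul_a_mul (h : AnnRelations j a b m) (x y z x' y' z' : ℤ) :
    annWord a b m x y z * a * annWord a b m x' y' z' =
      annWord a b m (x + x') (y + y') (z + (j * y' - z')) * a := by
  rw [mul_assoc, h.a_mul_annWord, ← mul_assoc, h.annWord_mul]

theorem annWord_mul_a_sq (h : AnnRelations j a b m) (x y z : ℤ) :
    (annWord a b m x y z * a) ^ 2 = annWord a b m (2 * x + 1) (2 * y) (j * y) := by
  have h₁ : a * a = annWord a b m 1 0 0 := by simp [annWord, sq]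
  rw [sq, ← mul_assoc, h.annWord_mul_a_mul, mul_assoc, h₁, h.annWord_mul]
  congr 1 <;> ring

theorem m_zpow_eq (z : ℤ) : m ^ z = annWord a b m 0 0 z := by simp [annWord]

/-- Normal form of `a ^ p * b ^ r` for odd `p`. -/
theorem odd_image_eq (h : AnnRelations j a b m) (u r : ℤ) :
    a ^ (2 * u + 1) * b ^ r = annWord a b m u r (j * r) * a := by
  have h₁ : a ^ (2 * u + 1) = annWord a b m u 0 0 * a := by
    simp [annWord, zpow_add, zpow_mul]
  have h₂ : b ^ r = annWord a b m 0 r 0 := by simp [annWord]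
  rw [h₁, h₂, h.annWord_mul_a_mul]
  congr 2 <;> ring

/-- Normal form of `a ^ q * b ^ s * m ^ z` for even `q`. -/
theorem even_image_eq (v s z : ℤ) :
    a ^ (2 * v) * b ^ s * m ^ z = annWord a b m v s z := by
  rw [annWord, zpow_mul, zpow_ofNat]

/-- The relations are preserved by the change of basis. -/
theorem basisChange (h : AnnRelations j a b m) (u v r t : ℤ) :
    AnnRelations j (a ^ (2 * u + 1) * b ^ r)
      (a ^ (2 * v) * b ^ (2 * t + 1) * m ^ (j * t)) m := by
  have hm : m = annWord a b m 0 0 1 := by simp [annWord]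
  have hm' : m⁻¹ = annWord a b m 0 0 (-1) := by simp [annWord]
  rw [h.odd_image_eq, even_image_eq]
  refine ⟨?_, ?_, ?_⟩
  · rw [hm']
    nth_rewrite 2 [hm]
    rw [h.annWord_mul_a_mul, ← mul_assoc, h.annWord_mul]
    congr 2 <;> ring
  · nth_rewrite 2 [hm]
    nth_rewrite 3 [hm]
    rw [h.annWord_mul, h.annWord_mul]
    congr 1 <;> ring
  · rw [m_zpow_eq (a := a) (b := b) j, h.annWord_mul_a_mul, ← mul_assoc, h.annWord_mul,
      h.annWord_mul]
    congr 2 <;> ring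

/-- The basis change by the inverse matrix recovers `a`. -/
theorem basisChange_inverse_a (h : AnnRelations j a b m) {u v r t : ℤ}
    (hdet : (2 * u + 1) * (2 * t + 1) - 2 * v * r = 1) :
    (a ^ (2 * u + 1) * b ^ r) ^ (2 * t + 1) *
      (a ^ (2 * v) * b ^ (2 * t + 1) * m ^ (j * t)) ^ (-r) = a := by
  have hx : (2 * u + 1) * t + u + v * -r = 0 := by linarith
  have h₁ (g : G) : g ^ (2 * t + 1) = (g ^ 2) ^ t * g := by
    rw [zpow_add, zpow_mul, zpow_one, zpow_ofNat]
  rw [h₁, h.odd_image_eq, even_image_eq, h.annWord_mul_a_sq, h.annWord_zpow, h.annWord_zpow,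
    ← mul_assoc, h.annWord_mul, h.annWord_mul_a_mul, hx]
  have hy : 2 * r * t + r + (2 * t + 1) * -r = 0 := by ring
  have hz : j * r * t + j * r + (j * ((2 * t + 1) * -r) - j * t * -r) = 0 := by ring
  rw [hy, hz]
  simp [annWord]

/-- The basis change by the inverse matrix recovers `b`. -/
theorem basisChange_inverse_b (h : AnnRelations j a b m) {u v r t : ℤ}
    (hdet : (2 * u + 1) * (2 * t + 1) - 2 * v * r = 1) :
    (a ^ (2 * u + 1) * b ^ r) ^ (2 * -v) *
      (a ^ (2 * v) * b ^ (2 * t + 1) * m ^ (j * t)) ^ (2 * u + 1) * m ^ (j * u) = b := by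
  have h₁ (g : G) : g ^ (2 * -v) = (g ^ 2) ^ (-v) := by
    rw [zpow_mul, zpow_ofNat]
  rw [h₁, h.odd_image_eq, even_image_eq, h.annWord_mul_a_sq, h.annWord_zpow, h.annWord_zpow,
    m_zpow_eq (a := a) (b := b) (j * u), h.annWord_mul, h.annWord_mul]
  have hx : (2 * u + 1) * -v + v * (2 * u + 1) + 0 = 0 := by ring
  have hy : 2 * r * -v + (2 * t + 1) * (2 * u + 1) + 0 = 1 := by linarith
  have hz : j * r * -v + j * t * (2 * u + 1) + j * u = 0 := by
    have h₂ : r * -v + t * (2 * u + 1) + u = 0 := by linarith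
    linear_combination j * h₂
  rw [hx, hy, hz]
  simp [annWord]

end AnnRelations

namespace AnnGroup

variable {j : ℤ}

theorem relations (j : ℤ) :
    AnnRelations j (PresentedGroup.of AnnGen.a : AnnGroup j)
      (PresentedGroup.of AnnGen.b) (PresentedGroup.of AnnGen.m) := by
  have hone {w : FreeGroup AnnGen} (hw : w ∈ annulusRels j) :
      PresentedGroup.mk (annulusRels j) w = 1 := PresentedGroup.one_of_mem hw
  have h₁ := hone (Or.inl rfl)
  have h₂ := hone (Or.inr (Or.inl rfl))
  have h₃ := hone (Or.inr (Or.inr rfl))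
  simp only [map_mul, map_inv, map_zpow] at h₁ h₂ h₃
  change (PresentedGroup.of AnnGen.a : AnnGroup j)⁻¹ * PresentedGroup.of AnnGen.m *
    PresentedGroup.of AnnGen.a * PresentedGroup.of AnnGen.m = 1 at h₁
  change (PresentedGroup.of AnnGen.b : AnnGroup j) * PresentedGroup.of AnnGen.m *
    (PresentedGroup.of AnnGen.b)⁻¹ * (PresentedGroup.of AnnGen.m)⁻¹ = 1 at h₂
  change (PresentedGroup.of AnnGen.a : AnnGroup j) * PresentedGroup.of AnnGen.b *
    (PresentedGroup.of AnnGen.a)⁻¹ * (PresentedGroup.of AnnGen.b)⁻¹ *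
    PresentedGroup.of AnnGen.m ^ (-j) = 1 at h₃
  refine ⟨?_, ?_, ?_⟩
  · rw [mul_assoc, mul_assoc, inv_mul_eq_one] at h₁
    exact eq_inv_mul_of_mul_eq h₁.symm
  · rwa [mul_inv_eq_one, mul_inv_eq_iff_eq_mul] at h₂
  · rw [zpow_neg, mul_inv_eq_one, mul_inv_eq_iff_eq_mul, mul_inv_eq_iff_eq_mul] at h₃
    exact h₃

/-- The homomorphism out of `P_j` determined by a triple satisfying its relations. -/
def lift {G : Type*} [Group G] {a b m : G} (h : AnnRelations j a b m) : AnnGroup j →* G :=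
  PresentedGroup.toGroup (f := fun | .a => a | .b => b | .m => m) <| by
    rintro w (rfl | rfl | rfl)
    · simp [mul_assoc, h.a_mul_m]
    · simp [h.b_mul_m]
    · simp [h.a_mul_b]

variable {G : Type*} [Group G] {a b m : G}

@[simp]
theorem lift_a (h : AnnRelations j a b m) : lift h (PresentedGroup.of .a) = a :=
  PresentedGroup.toGroup.of _

@[simp]
theorem lift_b (h : AnnRelations j a b m) : lift h (PresentedGroup.of .b) = b :=
  PresentedGroup.toGroup.of _

@[simp]
theorem lift_m (h : AnnRelations j a b m) : lift h (PresentedGroup.of .m) = m :=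
  PresentedGroup.toGroup.of _

/-- The endomorphism of `P_j` given by the matrix `(2u+1, 2v; r, 2t+1)`. -/
def basisChange (j u v r t : ℤ) : AnnGroup j →* AnnGroup j :=
  lift ((relations j).basisChange u v r t)

theorem basisChange_comp_inverse {u v r t : ℤ}
    (hdet : (2 * u + 1) * (2 * t + 1) - 2 * v * r = 1) :
    (basisChange j u v r t).comp (basisChange j t (-v) (-r) u) = MonoidHom.id _ := by
  ext x
  cases x
  · simpa [basisChange] using (relations j).basisChange_inverse_a hdet
  · simpa [basisChange] using (relations j).basisChange_inverse_b hdet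
  · simp [basisChange]

end AnnGroup

/-- For `(p q; r s) ∈ SL(2,ℤ)` with `q` even and `s = 2t+1`, there is an automorphism
of `P_j` sending `α ↦ α^p β^r`, `β ↦ α^q β^s m^{jt}`, `m ↦ m`. -/
theorem annulus_group_automorphism_basis_change (j p q r s t : ℤ)
    (hdet : p * s - q * r = 1) (hq : Even q) (hs : s = 2 * t + 1) :
    ∃ φ : AnnGroup j ≃* AnnGroup j,
      φ (PresentedGroup.of AnnGen.a)
        = (PresentedGroup.of AnnGen.a : AnnGroup j) ^ p
          * (PresentedGroup.of AnnGen.b : AnnGroup j) ^ r ∧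
      φ (PresentedGroup.of AnnGen.b)
        = (PresentedGroup.of AnnGen.a : AnnGroup j) ^ q
          * (PresentedGroup.of AnnGen.b : AnnGroup j) ^ s
          * (PresentedGroup.of AnnGen.m : AnnGroup j) ^ (j * t) ∧
      φ (PresentedGroup.of AnnGen.m) = (PresentedGroup.of AnnGen.m : AnnGroup j) := by
  obtain ⟨v, rfl⟩ := even_iff_two_dvd.mp hq
  obtain ⟨u, rfl⟩ : Odd p := by
    have hodd : Odd (p * s) := ⟨v * r, by linarith⟩
    exact (Int.odd_mul.mp hodd).1
  subst hs
  have hdet' : (2 * t + 1) * (2 * u + 1) - 2 * -v * -r = 1 := by linarith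
  have hcomp := AnnGroup.basisChange_comp_inverse (j := j) hdet'
  rw [neg_neg, neg_neg] at hcomp
  refine ⟨MonoidHom.toMulEquiv (AnnGroup.basisChange j u v r t)
    (AnnGroup.basisChange j t (-v) (-r) u) hcomp
    (AnnGroup.basisChange_comp_inverse hdet), ?_, ?_, ?_⟩ <;>
  simp [AnnGroup.basisChange]
end

section
/- Let P₀ be the group with presentation ⟨α, β, m ∣ α⁻¹mα = m⁻¹, βm = mβ, αβα⁻¹β⁻¹ = 1⟩ and P₁ the group with presentation ⟨α, β, m ∣ α⁻¹mα = m⁻¹, βm = mβ, αβα⁻¹β⁻¹ = m⟩. Then P₀ and P₁ are not isomorphic as groups. -/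
/-- Homomorphisms from `P₁` to a commutative group are determined by the images of `α` and `β`,
since `m` is a commutator. -/
theorem AnnGroup.hom_ext_of_comm {C : Type*} [CommGroup C] {f g : AnnGroup 1 →* C}
    (ha : f (PresentedGroup.of AnnGen.a) = g (PresentedGroup.of AnnGen.a))
    (hb : f (PresentedGroup.of AnnGen.b) = g (PresentedGroup.of AnnGen.b)) : f = g := by
  have map_m_eq_one (h : AnnGroup 1 →* C) : h (PresentedGroup.of AnnGen.m) = 1 := by
    have hrel := congrArg h (PresentedGroup.one_of_mem (rels := annulusRels 1)
      (Or.inr (Or.inr rfl)))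
    simp only [map_mul, map_inv, map_zpow, map_one] at hrel
    simpa [PresentedGroup.of, mul_right_comm _ _ (h _)⁻¹] using hrel
  refine PresentedGroup.ext fun x => ?_
  cases x with
  | a => exact ha
  | b => exact hb
  | m => rw [map_m_eq_one, map_m_eq_one]

/-- The homomorphism from `P₀` to a commutative group with prescribed values on the generators,
where the value at `m` squares to `1`. -/
def AnnGroup.liftOfComm {C : Type*} [CommGroup C] (v : AnnGen → C)
    (hm : v AnnGen.m * v AnnGen.m = 1) : AnnGroup 0 →* C :=
  PresentedGroup.toGroup (f := v) <| by
    rintro r (rfl | rfl | rfl)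
    · simpa [mul_right_comm _ _ (v AnnGen.a)] using hm
    · simp
    · simp [mul_right_comm _ _ (v AnnGen.a)⁻¹]

/-- The groups `P₀ = π₁(Y₀)` and `P₁ = π₁(Y₁)` are not isomorphic. -/
theorem annulus_groups_not_isomorphic : IsEmpty (AnnGroup 0 ≃* AnnGroup 1) := by
  refine ⟨fun e => ?_⟩
  let C := Multiplicative (ZMod 2)
  have hC : ∀ c : C, c * c = 1 := by decide
  let v (p : C × C × C) (x : AnnGen) : C := AnnGen.casesOn x p.1 p.2.1 p.2.2
  let φ (p : C × C × C) : AnnGroup 0 →* C := AnnGroup.liftOfComm (v p) (hC _)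
  have hφ (p : C × C × C) (x : AnnGen) : φ p (PresentedGroup.of x) = v p x :=
    PresentedGroup.toGroup.of _
  let ψ (p : C × C × C) : AnnGroup 1 →* C := (φ p).comp e.symm.toMonoidHom
  let ev (p : C × C × C) : C × C :=
    (ψ p (PresentedGroup.of AnnGen.a), ψ p (PresentedGroup.of AnnGen.b))
  have hev : Function.Injective ev := by
    intro p q hpq
    have hψ : ψ p = ψ q :=
      AnnGroup.hom_ext_of_comm (congrArg Prod.fst hpq) (congrArg Prod.snd hpq)
    have hv (x : AnnGen) : v p x = v q x := by
      rw [← hφ, ← hφ]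
      simpa [ψ] using DFunLike.congr_fun hψ (e (PresentedGroup.of x))
    exact Prod.ext (hv AnnGen.a) (Prod.ext (hv AnnGen.b) (hv AnnGen.m))
  exact absurd (Fintype.card_le_of_injective ev hev) (by decide)
end

section
/- Let j, k ∈ {0,1} and let b, c, e, f be integers, and set d := 1 + 2bc. Let G be the group with presentation on generators α₁, β₁, α₂, β₂, m and relations α₁⁻¹mα₁ = m⁻¹, α₂⁻¹mα₂ = m⁻¹, β₁m = mβ₁, β₂m = mβ₂, α₁β₁α₁⁻¹β₁⁻¹ = m^j, α₂β₂α₂⁻¹β₂⁻¹ = m^k, α₁² = α₂²β₂^{2c}m^e, β₁ = α₂^{2b}β₂^{d}m^f. Let H be the group with presentation on generators α, β, m, γ and relations mγ = γm, αβα⁻¹β⁻¹ = m^{j+2(f−be)}, α⁻¹mα = m⁻¹, α⁻¹γα = m^{kc−e}γ⁻¹, β⁻¹mβ = m, β⁻¹γβ = m^{j−k+2(f−be)}γ. Then there is a group isomorphism θ : H → G with θ(α) = α₁, θ(β) = β₂, θ(m) = m, and θ(γ) = α₁⁻¹α₂β₂^{c}. -/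
/-- Generators `α₁`, `β₁`, `α₂`, `β₂`, `m` of the glued group `G`. -/
inductive GlueGen : Type
  | a1 : GlueGen  -- α₁
  | b1 : GlueGen  -- β₁
  | a2 : GlueGen  -- α₂
  | b2 : GlueGen  -- β₂
  | m : GlueGen   -- m

open FreeGroup in
/-- The relators of the presentation (c-even) of the paper, with `d = 1 + 2bc`:
`α₁⁻¹mα₁ = m⁻¹`, `α₂⁻¹mα₂ = m⁻¹`, `β₁m = mβ₁`, `β₂m = mβ₂`, `α₁β₁α₁⁻¹β₁⁻¹ = m^j`,
`α₂β₂α₂⁻¹β₂⁻¹ = m^k`, `α₁² = α₂²β₂^{2c}m^e`, `β₁ = α₂^{2b}β₂^{d}m^f`. -/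
def cEvenRels (j k b c e f : ℤ) : Set (FreeGroup GlueGen) :=
  { (of GlueGen.a1)⁻¹ * of GlueGen.m * of GlueGen.a1 * of GlueGen.m,
    (of GlueGen.a2)⁻¹ * of GlueGen.m * of GlueGen.a2 * of GlueGen.m,
    of GlueGen.b1 * of GlueGen.m * (of GlueGen.b1)⁻¹ * (of GlueGen.m)⁻¹,
    of GlueGen.b2 * of GlueGen.m * (of GlueGen.b2)⁻¹ * (of GlueGen.m)⁻¹,
    of GlueGen.a1 * of GlueGen.b1 * (of GlueGen.a1)⁻¹ * (of GlueGen.b1)⁻¹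
      * (of GlueGen.m) ^ (-j),
    of GlueGen.a2 * of GlueGen.b2 * (of GlueGen.a2)⁻¹ * (of GlueGen.b2)⁻¹
      * (of GlueGen.m) ^ (-k),
    (of GlueGen.a1) ^ 2
      * ((of GlueGen.a2) ^ 2 * (of GlueGen.b2) ^ (2 * c) * (of GlueGen.m) ^ e)⁻¹,
    of GlueGen.b1
      * ((of GlueGen.a2) ^ (2 * b) * (of GlueGen.b2) ^ (1 + 2 * b * c)
          * (of GlueGen.m) ^ f)⁻¹ }

/-- Generators `α`, `β`, `m`, `γ` of the torus-bundle group `H`. -/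
inductive TBGen : Type
  | a : TBGen  -- α
  | b : TBGen  -- β
  | m : TBGen  -- m
  | g : TBGen  -- γ

open FreeGroup in
/-- The relators of the presentation of the fundamental group of the torus bundle
`M((−1, kc−e; 0, −1), (1, j−k+2(f−be); 0, 1); (j+2(f−be), 0))`:
`mγ = γm`, `αβα⁻¹β⁻¹ = m^{j+2(f−be)}`, `α⁻¹mα = m⁻¹`, `α⁻¹γα = m^{kc−e}γ⁻¹`,
`β⁻¹mβ = m`, `β⁻¹γβ = m^{j−k+2(f−be)}γ`. -/
def torusBundleRels (j k b c e f : ℤ) : Set (FreeGroup TBGen) :=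
  { of TBGen.m * of TBGen.g * (of TBGen.m)⁻¹ * (of TBGen.g)⁻¹,
    of TBGen.a * of TBGen.b * (of TBGen.a)⁻¹ * (of TBGen.b)⁻¹
      * (of TBGen.m) ^ (-(j + 2 * (f - b * e))),
    (of TBGen.a)⁻¹ * of TBGen.m * of TBGen.a * of TBGen.m,
    (of TBGen.a)⁻¹ * of TBGen.g * of TBGen.a
      * ((of TBGen.m) ^ (k * c - e) * (of TBGen.g)⁻¹)⁻¹,
    (of TBGen.b)⁻¹ * of TBGen.m * of TBGen.b * (of TBGen.m)⁻¹,
    (of TBGen.b)⁻¹ * of TBGen.g * of TBGen.b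
      * ((of TBGen.m) ^ (j - k + 2 * (f - b * e)) * of TBGen.g)⁻¹ }

section Relations

variable {G : Type*} [Group G] {a A B m g : G}

theorem SemiconjBy.commute_sq_of_inv (h : SemiconjBy a m m⁻¹) : Commute (a ^ 2) m := by
  have := h.inv_right.mul_left h
  rwa [inv_inv, ← sq] at this

theorem SemiconjBy.commute_sq_of_zpow_mul {k : ℤ} (hm : SemiconjBy a m m⁻¹)
    (hB : SemiconjBy a B (m ^ k * B)) : Commute (a ^ 2) B := by
  have := ((hm.zpow_right k).mul_right hB).mul_left hB
  rwa [inv_zpow', zpow_neg, inv_mul_cancel_left, ← sq] at this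

/-- The square of `a * B ^ c` when `a` inverts `m` and conjugates `B` to `m ^ k * B`. -/
theorem mul_zpow_sq_of_semiconjBy {k : ℤ} (c : ℤ) (hm : SemiconjBy a m m⁻¹) (hBm : Commute B m)
    (hB : SemiconjBy a B (m ^ k * B)) :
    (a * B ^ c) ^ 2 = a ^ 2 * B ^ (2 * c) * m ^ (k * c) := by
  have hc : SemiconjBy a (B ^ c) (m ^ (k * c) * B ^ c) := by
    have := hB.zpow_right c
    rwa [(hBm.symm.zpow_left k).mul_zpow, ← zpow_mul] at this
  have hBa : B ^ c * a = a * B ^ c * m ^ (k * c) := by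
    have h₁ : SemiconjBy a (m ^ (k * c) * B ^ c) (B ^ c) := by
      have := (hm.zpow_right (k * c)).mul_right hc
      rwa [inv_zpow, inv_mul_cancel_left] at this
    rw [← h₁.eq, mul_assoc, (hBm.zpow_zpow c (k * c)).eq]
  calc (a * B ^ c) ^ 2 = a * (B ^ c * a) * B ^ c := by simp only [sq, mul_assoc]
    _ = a ^ 2 * B ^ c * (m ^ (k * c) * B ^ c) := by simp only [hBa, sq, mul_assoc]
    _ = a ^ 2 * B ^ (2 * c) * m ^ (k * c) := by
      rw [← (hBm.zpow_zpow c (k * c)).eq, two_mul, zpow_add]; group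

theorem zpow_mul_zpow_mul_zpow_eq (b c e f : ℤ) (ham : Commute (a ^ 2) m)
    (hBm : Commute B m) (haB : Commute (a ^ 2) B)
    (hA : A ^ 2 = a ^ 2 * B ^ (2 * c) * m ^ e) :
    a ^ (2 * b) * B ^ (1 + 2 * b * c) * m ^ f = A ^ (2 * b) * B * m ^ (f - b * e) := by
  have hA' : A ^ (2 * b) = a ^ (2 * b) * B ^ (2 * c * b) * m ^ (e * b) := by
    rw [zpow_mul, zpow_ofNat, hA,
      ((ham.zpow_right e).mul_left (hBm.zpow_zpow (2 * c) e)).mul_zpow,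
      (haB.zpow_right (2 * c)).mul_zpow, ← zpow_mul, ← zpow_mul, zpow_mul a, zpow_ofNat]
  rw [hA', mul_assoc _ (m ^ _) B, ← (hBm.zpow_right (e * b)).eq]
  simp only [mul_assoc]
  rw [← zpow_add, ← mul_assoc (B ^ _) B, ← zpow_add_one]
  congr 3 <;> ring

/-- `A` conjugates `A ^ (2 * b) * B * m ^ s` to its `m ^ j`-multiple exactly when it conjugates
`B` to `m ^ (j + 2 * s) * B`. -/
theorem semiconjBy_zpow_mul_zpow_iff (b s j : ℤ) (hA : SemiconjBy A m m⁻¹) (hBm : Commute B m) :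
    SemiconjBy A (A ^ (2 * b) * B * m ^ s) (m ^ j * (A ^ (2 * b) * B * m ^ s)) ↔
      SemiconjBy A B (m ^ (j + 2 * s) * B) := by
  have hAm : ∀ i : ℤ, Commute (A ^ (2 * b)) (m ^ i) := fun i ↦ by
    rw [zpow_mul, zpow_ofNat]
    exact hA.commute_sq_of_inv.zpow_zpow b i
  have hms : A * m ^ s = m ^ (-s) * A := by simpa using (hA.zpow_right s).eq
  have hl : A * (A ^ (2 * b) * B * m ^ s) = A ^ (2 * b) * (A * B) * m ^ s := by
    rw [← mul_assoc, ← mul_assoc, (Commute.self_zpow A (2 * b)).eq]; group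
  have hr : m ^ j * (A ^ (2 * b) * B * m ^ s) * A
      = A ^ (2 * b) * (m ^ (j + 2 * s) * B * A) * m ^ s := by
    calc _ = m ^ j * A ^ (2 * b) * (B * m ^ (2 * s)) * (m ^ (-s) * A) := by group
      _ = A ^ (2 * b) * m ^ j * (m ^ (2 * s) * B) * (A * m ^ s) := by
        rw [(hAm j).eq, (hBm.zpow_right (2 * s)).eq, hms]
      _ = _ := by rw [zpow_add]; group
  rw [SemiconjBy, SemiconjBy, hl, hr, mul_left_inj, mul_right_inj]

theorem inv_mul_mul_eq_zpow_mul_inv_iff (s : ℤ) :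
    A⁻¹ * g * A = m ^ s * g⁻¹ ↔ (A * g) ^ 2 = A ^ 2 * m ^ s := by
  rw [eq_mul_inv_iff_mul_eq, ← mul_right_inj (A ^ 2)]
  simp [sq, mul_assoc]

/-- When `A` conjugates `B` to `m ^ n * B`, the product `A * g` conjugates `B` to `m ^ k * B`
exactly when `B⁻¹` conjugates `g` to `m ^ (n - k) * g`. -/
theorem semiconjBy_mul_left_iff (n k : ℤ) (hA : SemiconjBy A m m⁻¹) (hBm : Commute B m)
    (hB : SemiconjBy A B (m ^ n * B)) :
    SemiconjBy (A * g) B (m ^ k * B) ↔ B⁻¹ * g * B = m ^ (n - k) * g := by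
  have hAm : m ^ k * (m ^ n)⁻¹ * A = A * m ^ (n - k) := by
    rw [← zpow_neg, ← zpow_add]
    simpa [← zpow_neg, sub_eq_add_neg, add_comm] using (hA.zpow_right (n - k)).eq.symm
  have hr : m ^ k * B * (A * g) = A * (B * (m ^ (n - k) * g)) := by
    calc _ = m ^ k * (m ^ n)⁻¹ * (m ^ n * B * A) * g := by group
      _ = A * (m ^ (n - k) * B) * g := by rw [← hB.eq, ← mul_assoc, hAm]; group
      _ = _ := by rw [← (hBm.zpow_right (n - k)).eq]; group
  rw [SemiconjBy, hr, mul_assoc A g B, mul_right_inj, mul_assoc B⁻¹, inv_mul_eq_iff_eq_mul]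

theorem semiconjBy_mul_zpow_left_iff {x : G} (c : ℤ) :
    SemiconjBy (a * B ^ c) B x ↔ SemiconjBy a B x := by
  rw [SemiconjBy, SemiconjBy, mul_assoc, ← (Commute.self_zpow B c).eq, ← mul_assoc, ← mul_assoc,
    mul_left_inj]

theorem inv_mul_mul_mul_eq_one_iff : a⁻¹ * m * a * m = 1 ↔ SemiconjBy a m m⁻¹ := by
  rw [mul_eq_one_iff_eq_inv, mul_assoc, inv_mul_eq_iff_eq_mul, SemiconjBy,
    eq_mul_inv_iff_mul_eq, mul_assoc, ← eq_inv_mul_iff_mul_eq]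

theorem mul_mul_inv_eq_iff_commute : a * m * a⁻¹ = m ↔ Commute a m := by
  rw [mul_inv_eq_iff_eq_mul, commute_iff_eq]

theorem commutator_mul_zpow_neg_eq_one_iff (i : ℤ) :
    a * B * a⁻¹ * B⁻¹ * m ^ (-i) = 1 ↔ SemiconjBy a B (m ^ i * B) := by
  rw [zpow_neg, mul_inv_eq_one, mul_inv_eq_iff_eq_mul, mul_inv_eq_iff_eq_mul, SemiconjBy]

end Relations

section Lift

variable {G : Type*} [Group G] {j k b c e f : ℤ}

theorem lift_cEvenRels_eq_one_iff (φ : GlueGen → G) :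
    (∀ r ∈ cEvenRels j k b c e f, FreeGroup.lift φ r = 1) ↔
      SemiconjBy (φ .a1) (φ .m) (φ .m)⁻¹ ∧ SemiconjBy (φ .a2) (φ .m) (φ .m)⁻¹ ∧
      Commute (φ .b1) (φ .m) ∧ Commute (φ .b2) (φ .m) ∧
      SemiconjBy (φ .a1) (φ .b1) (φ .m ^ j * φ .b1) ∧
      SemiconjBy (φ .a2) (φ .b2) (φ .m ^ k * φ .b2) ∧
      φ .a1 ^ 2 = φ .a2 ^ 2 * φ .b2 ^ (2 * c) * φ .m ^ e ∧
      φ .b1 = φ .a2 ^ (2 * b) * φ .b2 ^ (1 + 2 * b * c) * φ .m ^ f := by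
  simp only [cEvenRels, Set.forall_mem_insert, Set.mem_singleton_iff, forall_eq, map_mul, map_inv,
    map_zpow, map_pow, FreeGroup.lift_apply_of, inv_mul_mul_mul_eq_one_iff,
    commutator_mul_zpow_neg_eq_one_iff, mul_mul_inv_eq_iff_commute, mul_inv_eq_one]

theorem lift_torusBundleRels_eq_one_iff (φ : TBGen → G) :
    (∀ r ∈ torusBundleRels j k b c e f, FreeGroup.lift φ r = 1) ↔
      Commute (φ .m) (φ .g) ∧
      SemiconjBy (φ .a) (φ .b) (φ .m ^ (j + 2 * (f - b * e)) * φ .b) ∧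
      SemiconjBy (φ .a) (φ .m) (φ .m)⁻¹ ∧
      (φ .a)⁻¹ * φ .g * φ .a = φ .m ^ (k * c - e) * (φ .g)⁻¹ ∧
      Commute (φ .b) (φ .m) ∧
      (φ .b)⁻¹ * φ .g * φ .b = φ .m ^ (j - k + 2 * (f - b * e)) * φ .g := by
  have hbm : (φ .b)⁻¹ * φ .m * φ .b = φ .m ↔ Commute (φ .b) (φ .m) := by
    rw [mul_assoc, inv_mul_eq_iff_eq_mul, commute_iff_eq, eq_comm]
  simp only [torusBundleRels, Set.forall_mem_insert, Set.mem_singleton_iff, forall_eq, map_mul,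
    map_inv, map_zpow, FreeGroup.lift_apply_of, inv_mul_mul_mul_eq_one_iff,
    commutator_mul_zpow_neg_eq_one_iff, mul_mul_inv_eq_iff_commute, mul_inv_eq_one, hbm]

theorem PresentedGroup.lift_of_eq_one {α : Type*} {rels : Set (FreeGroup α)} :
    ∀ r ∈ rels, FreeGroup.lift (PresentedGroup.of (rels := rels)) r = 1 := by
  intro r hr
  have h : FreeGroup.lift (PresentedGroup.of (rels := rels)) = PresentedGroup.mk rels := by
    ext x
    simp [PresentedGroup.of]
  rw [h, PresentedGroup.one_of_mem hr]

/-- The images of `α`, `β`, `m`, `γ` under the isomorphism, in terms of the images of the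
generators of the glued group. -/
def torusBundleImage (c : ℤ) (φ : GlueGen → G) : TBGen → G
  | .a => φ .a1
  | .b => φ .b2
  | .m => φ .m
  | .g => (φ .a1)⁻¹ * φ .a2 * φ .b2 ^ c

/-- The images of `α₁`, `β₁`, `α₂`, `β₂`, `m` under the inverse isomorphism, in terms of the images
of the generators of the torus-bundle group. -/
def glueImage (b c e f : ℤ) (φ : TBGen → G) : GlueGen → G
  | .a1 => φ .a
  | .b1 => φ .a ^ (2 * b) * φ .b * φ .m ^ (f - b * e)
  | .a2 => φ .a * φ .g * φ .b ^ (-c)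
  | .b2 => φ .b
  | .m => φ .m

theorem b1_eq_of_lift_cEvenRels_eq_one {φ : GlueGen → G}
    (h : ∀ r ∈ cEvenRels j k b c e f, FreeGroup.lift φ r = 1) :
    φ .b1 = φ .a1 ^ (2 * b) * φ .b2 * φ .m ^ (f - b * e) := by
  obtain ⟨-, ha, -, hBm, -, haB, hsq, hb1⟩ := (lift_cEvenRels_eq_one_iff φ).1 h
  rw [hb1, zpow_mul_zpow_mul_zpow_eq b c e f ha.commute_sq_of_inv hBm
    (ha.commute_sq_of_zpow_mul haB) hsq]

theorem lift_torusBundleImage_eq_one {φ : GlueGen → G}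
    (h : ∀ r ∈ cEvenRels j k b c e f, FreeGroup.lift φ r = 1) :
    ∀ r ∈ torusBundleRels j k b c e f, FreeGroup.lift (torusBundleImage c φ) r = 1 := by
  have hb1 := b1_eq_of_lift_cEvenRels_eq_one h
  obtain ⟨hA, ha, -, hBm, hAb, haB, hsq, -⟩ := (lift_cEvenRels_eq_one_iff φ).1 h
  rw [hb1, semiconjBy_zpow_mul_zpow_iff _ _ _ hA hBm] at hAb
  have hmg : Commute (φ .m) ((φ .a1)⁻¹ * φ .a2 * φ .b2 ^ c) := by
    have h₁ : SemiconjBy (φ .a1)⁻¹ (φ .m)⁻¹ (φ .m) := hA.inv_symm_left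
    exact (Commute.symm (h₁.mul_left ha)).mul_right (hBm.symm.zpow_right c)
  have hx : φ .a1 * ((φ .a1)⁻¹ * φ .a2 * φ .b2 ^ c) = φ .a2 * φ .b2 ^ c := by group
  refine (lift_torusBundleRels_eq_one_iff _).2 ⟨hmg, hAb, hA, ?_, hBm, ?_⟩
  · refine (inv_mul_mul_eq_zpow_mul_inv_iff _).2 ?_
    simp only [torusBundleImage]
    rw [hx, mul_zpow_sq_of_semiconjBy c ha hBm haB, hsq, mul_assoc _ (φ .m ^ e), ← zpow_add,
      add_sub_cancel]
  · rw [show j - k + 2 * (f - b * e) = j + 2 * (f - b * e) - k by ring]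
    refine (semiconjBy_mul_left_iff _ k hA hBm hAb).1 ?_
    simp only [torusBundleImage]
    rwa [hx, semiconjBy_mul_zpow_left_iff]

theorem lift_glueImage_eq_one {φ : TBGen → G}
    (h : ∀ r ∈ torusBundleRels j k b c e f, FreeGroup.lift φ r = 1) :
    ∀ r ∈ cEvenRels j k b c e f, FreeGroup.lift (glueImage b c e f φ) r = 1 := by
  obtain ⟨hmg, hAb, hA, hgA, hBm, hgB⟩ := (lift_torusBundleRels_eq_one_iff φ).1 h
  set a := φ .a * φ .g * φ .b ^ (-c) with ha_def
  have hx : a * φ .b ^ c = φ .a * φ .g := by simp [ha_def]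
  have ha : SemiconjBy a (φ .m) (φ .m)⁻¹ :=
    (hA.mul_left hmg.symm).mul_left (hBm.zpow_left (-c))
  have haB : SemiconjBy a (φ .b) (φ .m ^ k * φ .b) := by
    rw [show j - k + 2 * (f - b * e) = j + 2 * (f - b * e) - k by ring] at hgB
    rw [← semiconjBy_mul_zpow_left_iff c, hx]
    exact (semiconjBy_mul_left_iff _ k hA hBm hAb).2 hgB
  have hsq : φ .a ^ 2 = a ^ 2 * φ .b ^ (2 * c) * φ .m ^ e := by
    have := mul_zpow_sq_of_semiconjBy c ha hBm haB
    rw [hx, (inv_mul_mul_eq_zpow_mul_inv_iff _).1 hgA] at this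
    rw [eq_mul_inv_of_mul_eq this, mul_assoc, ← zpow_sub, sub_sub_cancel]
  have hAm : Commute (φ .a ^ (2 * b)) (φ .m) := by
    rw [zpow_mul, zpow_ofNat]
    exact hA.commute_sq_of_inv.zpow_left b
  exact (lift_cEvenRels_eq_one_iff _).2 ⟨hA, ha,
    (hAm.mul_left hBm).mul_left (Commute.zpow_self (φ .m) _), hBm,
    (semiconjBy_zpow_mul_zpow_iff b _ j hA hBm).2 hAb, haB, hsq,
    (zpow_mul_zpow_mul_zpow_eq b c e f ha.commute_sq_of_inv hBm
      (ha.commute_sq_of_zpow_mul haB) hsq).symm⟩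

end Lift

/-- The group (c-even) of the paper is isomorphic to the fundamental group of the torus
bundle over the torus `M((−1, kc−e; 0, −1), (1, j−k+2(f−be); 0, 1); (j+2(f−be), 0))`,
via `α ↦ α₁`, `β ↦ β₂`, `m ↦ m`, `γ ↦ α₁⁻¹α₂β₂^c`. -/
theorem cEven_group_is_torus_bundle_group (j k b c e f : ℤ)
    (hj : j = 0 ∨ j = 1) (hk : k = 0 ∨ k = 1) :
    ∃ θ : PresentedGroup (torusBundleRels j k b c e f)
        ≃* PresentedGroup (cEvenRels j k b c e f),
      θ (PresentedGroup.of TBGen.a) = PresentedGroup.of GlueGen.a1 ∧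
      θ (PresentedGroup.of TBGen.b) = PresentedGroup.of GlueGen.b2 ∧
      θ (PresentedGroup.of TBGen.m) = PresentedGroup.of GlueGen.m ∧
      θ (PresentedGroup.of TBGen.g)
        = (PresentedGroup.of GlueGen.a1 : PresentedGroup (cEvenRels j k b c e f))⁻¹
          * PresentedGroup.of GlueGen.a2
          * (PresentedGroup.of GlueGen.b2 : PresentedGroup (cEvenRels j k b c e f)) ^ c := by
  have hG := PresentedGroup.lift_of_eq_one (rels := cEvenRels j k b c e f)
  have hH := PresentedGroup.lift_of_eq_one (rels := torusBundleRels j k b c e f)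
  let F := PresentedGroup.toGroup (lift_torusBundleImage_eq_one hG)
  let K := PresentedGroup.toGroup (lift_glueImage_eq_one hH)
  refine ⟨F.toMulEquiv K ?_ ?_, ?_, ?_, ?_, ?_⟩
  · refine PresentedGroup.ext fun x ↦ ?_
    cases x <;> simp [F, K, torusBundleImage, glueImage, mul_assoc]
  · refine PresentedGroup.ext fun x ↦ ?_
    cases x <;>
      simp [F, K, torusBundleImage, glueImage, mul_assoc, b1_eq_of_lift_cEvenRels_eq_one hG]
  all_goals simp [F, torusBundleImage]
end
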